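/- Let 0 < ρ₀ < 1, λ₀ > 0, and set B₁ = 43, B₂ = 4.6. Suppose t₀ ≥ 2 satisfies t₀^{ρ₀} > (B₁/ρ₀ + B₂ ln t₀)/λ₀. Then for every d > 0 there exists a unique ρ ∈ [ρ₀, 1) such that E_ρ(−λ₀ t₀^ρ) = d if and only if e^{−λ₀ t₀} < d ≤ E_{ρ₀}(−λ₀ t₀^{ρ₀}). -/

import Mathlib

open Set Real

/-- The Mittag-Leffler function `E_ρ(z) = ∑_{k=0}^∞ z^k / Γ(ρk + 1)`. -/
noncomputable def mittagLeffler (ρ z : ℝ) : ℝ := ∑' k : ℕ, z ^ k / Real.Gamma (ρ * k + 1)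

namespace ML
open MeasureTheory Filter Topology

lemma integrableOn_rpow_exp {b r : ℝ} (hb : 0 < b) (hr : 0 < r) :
    IntegrableOn (fun τ : ℝ => τ ^ (b - 1) * Real.exp (-(r * τ))) (Ioi 0) := by
  have := integrableOn_rpow_mul_exp_neg_mul_rpow (p := 1) (s := b - 1) (b := r)
    (by linarith) one_pos hr
  simpa [Real.rpow_one] using this

lemma norm_rpow_cexp (b τ : ℝ) (hτ : 0 < τ) (r : ℂ) :
    ‖((τ ^ (b - 1) : ℝ) : ℂ) * Complex.exp (-(r * τ))‖ = τ ^ (b - 1) * Real.exp (-(r.re * τ)) := by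
  rw [norm_mul, Complex.norm_exp, Complex.norm_real, Real.norm_of_nonneg (by positivity)]
  simp

lemma aesm_rpow_cexp (b : ℝ) (r : ℂ) :
    AEStronglyMeasurable (fun τ : ℝ => ((τ ^ (b - 1) : ℝ) : ℂ) * Complex.exp (-(r * τ)))
      (volume.restrict (Ioi 0)) := by
  apply Measurable.aestronglyMeasurable
  fun_prop

lemma integrableOn_rpow_cexp {b : ℝ} {r : ℂ} (hb : 0 < b) (hr : 0 < r.re) :
    IntegrableOn (fun τ : ℝ => ((τ ^ (b - 1) : ℝ) : ℂ) * Complex.exp (-(r * τ))) (Ioi 0) := by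
  refine (integrableOn_rpow_exp hb hr).mono' (aesm_rpow_cexp b r) ?_
  filter_upwards [ae_restrict_mem measurableSet_Ioi] with τ hτ
  rw [norm_rpow_cexp b τ hτ r]

lemma gamma_laplace {b : ℝ} {r : ℂ} (hb : 0 < b) (hr : 0 < r.re) :
    ∫ τ in Ioi (0:ℝ), ((τ ^ (b - 1) : ℝ) : ℂ) * Complex.exp (-(r * τ))
      = Real.Gamma b * Complex.exp (-(b * Complex.log r)) := by
  set U : Set ℂ := {z | 0 < z.re} with hU
  have hUo : IsOpen U := isOpen_lt continuous_const Complex.continuous_re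
  have hUc : IsPreconnected U := (convex_halfSpace_re_gt 0).isPreconnected
  have hdiff : DifferentiableOn ℂ
      (fun r : ℂ => ∫ τ in Ioi (0:ℝ), ((τ ^ (b - 1) : ℝ) : ℂ) * Complex.exp (-(r * τ))) U := by
    intro z hz
    have hz' : 0 < z.re := hz
    refine DifferentiableAt.differentiableWithinAt ?_
    have hs : {w : ℂ | z.re / 2 < w.re} ∈ 𝓝 z :=
      (isOpen_lt continuous_const Complex.continuous_re).mem_nhds (by
        show z.re / 2 < z.re; linarith)
    have key := hasDerivAt_integral_of_dominated_loc_of_deriv_le (𝕜 := ℂ)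
      (μ := volume.restrict (Ioi (0:ℝ)))
      (F := fun (r : ℂ) (τ : ℝ) => ((τ ^ (b - 1) : ℝ) : ℂ) * Complex.exp (-(r * τ)))
      (F' := fun (r : ℂ) (τ : ℝ) => ((τ ^ (b - 1) : ℝ) : ℂ) * (Complex.exp (-(r * τ)) * (-τ)))
      (bound := fun τ : ℝ => τ ^ ((b + 1) - 1) * Real.exp (-(z.re / 2 * τ)))
      hs (Eventually.of_forall fun r => aesm_rpow_cexp b r) (integrableOn_rpow_cexp hb hz')
      ?_ ?_ (integrableOn_rpow_exp (by linarith) (by linarith)) ?_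
    · exact key.2.differentiableAt
    · apply Measurable.aestronglyMeasurable
      fun_prop
    · filter_upwards [ae_restrict_mem measurableSet_Ioi] with τ hτ w hw
      have hτ' : (0:ℝ) < τ := hτ
      have hw' : z.re / 2 < w.re := hw
      rw [← mul_assoc, norm_mul, norm_rpow_cexp b τ hτ w, norm_neg, Complex.norm_real,
        Real.norm_of_nonneg hτ'.le, show b + 1 - 1 = (b - 1) + 1 by ring, Real.rpow_add_one hτ'.ne']
      have : Real.exp (-(w.re * τ)) ≤ Real.exp (-(z.re / 2 * τ)) := by
        apply Real.exp_le_exp.2; nlinarith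
      have h2 : 0 ≤ τ ^ (b - 1) * τ := by positivity
      nlinarith
    · filter_upwards with τ w _
      refine HasDerivAt.const_mul _ ?_
      have h1 : HasDerivAt (fun x : ℂ => -(x * (τ:ℂ))) (-(τ:ℂ)) w := 
        (hasDerivAt_mul_const (τ:ℂ)).fun_neg
      exact h1.cexp
  have hdiff2 : DifferentiableOn ℂ
      (fun r : ℂ => (Real.Gamma b : ℂ) * Complex.exp (-(b * Complex.log r))) U := by
    intro z hz
    have hz' : z ∈ Complex.slitPlane := Or.inl hz
    have := Complex.differentiableAt_log hz'
    exact DifferentiableAt.differentiableWithinAt (by fun_prop)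
  have hreal : ∀ x : ℝ, 0 < x →
      ∫ τ in Ioi (0:ℝ), ((τ ^ (b - 1) : ℝ) : ℂ) * Complex.exp (-((x:ℂ) * τ))
      = Real.Gamma b * Complex.exp (-(b * Complex.log x)) := by
    intro x hx
    have := Real.integral_rpow_mul_exp_neg_mul_Ioi hb hx
    have h2 : (∫ τ in Ioi (0:ℝ), ((τ ^ (b - 1) : ℝ) : ℂ) * Complex.exp (-((x:ℂ) * τ)))
        = ((∫ τ in Ioi (0:ℝ), τ ^ (b - 1) * Real.exp (-(x * τ)) : ℝ) : ℂ) := by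
      rw [← integral_complex_ofReal]
      congr 1; ext τ; push_cast; rfl
    rw [h2, this, Real.rpow_def_of_pos (by positivity), one_div, Real.log_inv, ← Complex.ofReal_log hx.le]
    push_cast
    rw [mul_comm]
    congr 2; ring
  have := AnalyticOnNhd.eqOn_of_preconnected_of_frequently_eq (hdiff.analyticOnNhd hUo)
    (hdiff2.analyticOnNhd hUo) hUc (z₀ := 1) (by simp [hU]) ?_
  · exact this hr
  · have ht : Tendsto (fun x : ℝ => (x : ℂ)) (𝓝[>] 1) (𝓝[≠] 1) := by
      refine tendsto_nhdsWithin_iff.2 ⟨?_, ?_⟩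
      · have : Tendsto (fun x : ℝ => (x : ℂ)) (𝓝 1) (𝓝 ((1:ℝ):ℂ)) :=
          Complex.continuous_ofReal.continuousAt
        simpa using this.mono_left nhdsWithin_le_nhds
      · filter_upwards [self_mem_nhdsWithin] with x hx
        have : (1:ℝ) < x := hx
        simp only [mem_compl_iff, mem_singleton_iff]
        norm_cast
        exact this.ne'
    refine ht.frequently (Eventually.frequently ?_)
    filter_upwards [self_mem_nhdsWithin] with x hx
    exact hreal x (lt_trans one_pos hx)

lemma integrable_gauss (c : ℝ) : Integrable (fun y : ℝ => Real.exp (c ^ 2 - y ^ 2)) := by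
  have := (integrable_exp_neg_mul_sq one_pos).const_mul (Real.exp (c^2))
  refine this.congr (Eventually.of_forall fun y => ?_)
  simp only [← Real.exp_add]
  congr 1; ring

lemma gauss_shift (c τ : ℝ) :
    ∫ y : ℝ, Complex.exp ((c + y * Complex.I) ^ 2) * Complex.exp (-((c + y * Complex.I) * τ))
      = √π * Real.exp (-(1 / 4) * τ ^ 2) := by
  have := integral_cexp_quadratic (b := -1) (by simp) ((2 * c - τ) * Complex.I) (c ^ 2 - c * τ)
  have e : (fun y : ℝ => Complex.exp ((c + y * Complex.I) ^ 2)
      * Complex.exp (-((c + y * Complex.I) * τ)))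
      = fun y : ℝ => Complex.exp (-1 * (y:ℂ) ^ 2 + (2 * c - τ) * Complex.I * y + (c ^ 2 - c * τ)) := by
    ext y
    rw [← Complex.exp_add]
    congr 1
    linear_combination (y:ℂ)^2 * Complex.I_sq
  rw [e, this]
  have h1 : ((π:ℂ) / - -1) ^ (1 / 2 : ℂ) = (√π : ℝ) := by
    rw [Real.sqrt_eq_rpow, Complex.ofReal_cpow pi_pos.le]; simp
  rw [h1, Complex.ofReal_exp]
  congr 2
  push_cast
  linear_combination (1/4 : ℂ) * (2 * c - τ)^2 * Complex.I_sq

lemma norm_exp_sq (c y : ℝ) : ‖Complex.exp ((c + y * Complex.I) ^ 2)‖ = Real.exp (c ^ 2 - y ^ 2) := by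
  rw [Complex.norm_exp]
  congr 1
  simp [pow_two]

/-- Hankel-type formula for the reciprocal gamma function on a vertical line. -/
lemma hankel {b c : ℝ} (hb : 0 < b) (hc : 0 < c) :
    ∫ y : ℝ, Complex.exp ((c + y * Complex.I) ^ 2)
        * Complex.exp (-(b * Complex.log (c + y * Complex.I)))
      = ((π / Real.Gamma ((b + 1) / 2) : ℝ) : ℂ) := by
  have hG : (Real.Gamma b : ℂ) ≠ 0 := by
    exact_mod_cast (Real.Gamma_pos_of_pos hb).ne'
  have hswap := integral_integral_swap (μ := (volume : Measure ℝ))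
    (ν := volume.restrict (Ioi (0:ℝ)))
    (f := fun (y : ℝ) (τ : ℝ) => Complex.exp ((c + y * Complex.I) ^ 2) *
      (((τ ^ (b - 1) : ℝ) : ℂ) * Complex.exp (-((c + y * Complex.I) * τ)))) ?_
  · have e1 : ∀ y : ℝ, ∫ τ in Ioi (0:ℝ), Complex.exp ((c + y * Complex.I) ^ 2) *
        (((τ ^ (b - 1) : ℝ) : ℂ) * Complex.exp (-((c + y * Complex.I) * τ)))
        = Real.Gamma b * (Complex.exp ((c + y * Complex.I) ^ 2)
        * Complex.exp (-(b * Complex.log (c + y * Complex.I)))) := by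
      intro y
      rw [integral_const_mul, gamma_laplace hb (by simpa using hc)]
      ring
    have e2 : ∀ τ : ℝ, ∫ y : ℝ, Complex.exp ((c + y * Complex.I) ^ 2) *
        (((τ ^ (b - 1) : ℝ) : ℂ) * Complex.exp (-((c + y * Complex.I) * τ)))
        = ((√π * (τ ^ (b - 1) * Real.exp (-(1/4) * τ ^ (2:ℝ))) : ℝ) : ℂ) := by
      intro τ
      have : ∀ y : ℝ, Complex.exp ((c + y * Complex.I) ^ 2) *
        (((τ ^ (b - 1) : ℝ) : ℂ) * Complex.exp (-((c + y * Complex.I) * τ)))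
        = ((τ ^ (b - 1) : ℝ) : ℂ) * (Complex.exp ((c + y * Complex.I) ^ 2) *
          Complex.exp (-((c + y * Complex.I) * τ))) := fun y => by ring
      simp_rw [this]
      rw [integral_const_mul, gauss_shift, Real.rpow_two]
      push_cast; ring
    simp_rw [e1, e2] at hswap
    rw [integral_const_mul, integral_complex_ofReal, integral_const_mul,
      integral_rpow_mul_exp_neg_mul_rpow two_pos (by linarith) (by norm_num)] at hswap
    have hG2 := Real.Gamma_pos_of_pos (show 0 < (b+1)/2 by linarith)
    have hG3 := Real.Gamma_pos_of_pos hb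
    have dup := Real.Gamma_mul_Gamma_add_half (b / 2)
    rw [show b / 2 + 1 / 2 = (b + 1) / 2 by ring, show 2 * (b / 2) = b by ring] at dup
    have hpow : (1 / 4 : ℝ) ^ (-(b - 1 + 1) / 2) = 2 ^ b := by
      rw [show (1/4 : ℝ) = 2 ^ (-2 : ℝ) by rw [Real.rpow_neg (by norm_num)]; norm_num,
        ← Real.rpow_mul (by norm_num)]
      congr 1; ring
    have h2 : (2:ℝ) ^ (1 - b) * 2 ^ b = 2 := by
      rw [← Real.rpow_add (by norm_num)]; norm_num
    apply mul_left_cancel₀ hG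
    rw [hswap, ← Complex.ofReal_mul]
    congr 1
    rw [hpow, show (b - 1 + 1) / 2 = b / 2 by ring]
    have hs : √π * √π = π := Real.mul_self_sqrt pi_pos.le
    rw [← mul_div_assoc (Real.Gamma b), eq_div_iff hG2.ne']
    calc √π * (2 ^ b * (1 / 2) * Real.Gamma (b / 2)) * Real.Gamma ((b + 1) / 2)
        = √π * 2 ^ b * (1 / 2) * (Real.Gamma (b / 2) * Real.Gamma ((b + 1) / 2)) := by ring
      _ = (√π * √π) * (1/2) * Real.Gamma b * (2 ^ (1 - b) * 2 ^ b) := by rw [dup]; ring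
      _ = Real.Gamma b * π := by rw [hs, h2]; ring
  · have hp := (integrable_gauss c).mul_prod (integrableOn_rpow_exp hb hc)
    refine hp.mono' ?_ ?_
    · apply Measurable.aestronglyMeasurable
      unfold Function.uncurry
      fun_prop
    · have : ∀ᵐ z : ℝ × ℝ ∂((volume : Measure ℝ).prod (volume.restrict (Ioi (0:ℝ)))), 0 < z.2 := by
        have h := ae_restrict_mem (μ := (volume : Measure ℝ)) (measurableSet_Ioi (a := (0:ℝ)))
        exact Measure.quasiMeasurePreserving_snd.ae h
      filter_upwards [this] with z hz
      simp only [Function.uncurry]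
      rw [norm_mul, norm_exp_sq, norm_rpow_cexp b z.2 hz]
      simp
end ML

namespace ML
open MeasureTheory Filter Topology

lemma integrable_moment (n : ℕ) : Integrable (fun y : ℝ => y ^ n * Real.exp (-y ^ 2)) := by
  have := integrable_rpow_mul_exp_neg_mul_sq one_pos (s := (n:ℝ)) (by
    have : (0:ℝ) ≤ n := Nat.cast_nonneg n
    linarith)
  simpa [Real.rpow_natCast] using this

lemma moment_even (k : ℕ) : ∫ y : ℝ, y ^ (2 * k) * Real.exp (-y ^ 2) = Real.Gamma (k + 1 / 2) := by
  have h := integral_comp_abs (f := fun y : ℝ => y ^ (2 * k) * Real.exp (-y ^ 2))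
  have h1 : (fun y : ℝ => |y| ^ (2 * k) * Real.exp (-|y| ^ 2))
      = fun y : ℝ => y ^ (2 * k) * Real.exp (-y ^ 2) := by
    ext y; rw [pow_mul, sq_abs, ← pow_mul]
  rw [h1] at h
  rw [h]
  have h2 := integral_rpow_mul_exp_neg_mul_rpow (p := 2) (q := ((2 * k : ℕ) : ℝ)) (b := 1)
    two_pos (by
      have : (0:ℝ) ≤ ((2 * k : ℕ) : ℝ) := Nat.cast_nonneg _
      linarith) one_pos
  simp only [Real.rpow_natCast, Real.rpow_two, Real.one_rpow] at h2
  rw [show (fun y : ℝ => y ^ (2 * k) * Real.exp (-y ^ 2))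
    = fun y : ℝ => y ^ (2 * k) * Real.exp (-1 * y ^ 2) by ext y; simp, h2]
  push_cast
  rw [show (2 * (k:ℝ) + 1) / 2 = k + 1 / 2 by ring]
  ring

lemma moments : (∫ y : ℝ, Real.exp (-y ^ 2) = √π) ∧
    (∫ y : ℝ, y ^ 2 * Real.exp (-y ^ 2) = √π / 2) ∧
    (∫ y : ℝ, y ^ 4 * Real.exp (-y ^ 2) = √π * 3 / 4) ∧
    (∫ y : ℝ, y ^ 6 * Real.exp (-y ^ 2) = √π * 15 / 8) ∧
    (∫ y : ℝ, y ^ 8 * Real.exp (-y ^ 2) = √π * 105 / 16) := by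
  have h0 := moment_even 0
  have h1 := moment_even 1
  have h2 := moment_even 2
  have h3 := moment_even 3
  have h4 := moment_even 4
  have g0 : Real.Gamma (1 / 2) = √π := Real.Gamma_one_half_eq
  have g1 : Real.Gamma (3 / 2) = √π / 2 := by
    rw [show (3:ℝ) / 2 = 1 / 2 + 1 by norm_num, Real.Gamma_add_one (by norm_num), g0]; ring
  have g2 : Real.Gamma (5 / 2) = √π * 3 / 4 := by
    rw [show (5:ℝ) / 2 = 3 / 2 + 1 by norm_num, Real.Gamma_add_one (by norm_num), g1]; ring
  have g3 : Real.Gamma (7 / 2) = √π * 15 / 8 := by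
    rw [show (7:ℝ) / 2 = 5 / 2 + 1 by norm_num, Real.Gamma_add_one (by norm_num), g2]; ring
  have g4 : Real.Gamma (9 / 2) = √π * 105 / 16 := by
    rw [show (9:ℝ) / 2 = 7 / 2 + 1 by norm_num, Real.Gamma_add_one (by norm_num), g3]; ring
  norm_num at h0 h1 h2 h3 h4
  refine ⟨?_, ?_, ?_, ?_, ?_⟩
  · rw [← g0]; exact h0
  · rw [← g1]; exact h1
  · rw [← g2]; exact h2
  · rw [← g3]; exact h3
  · rw [← g4]; exact h4

lemma integrable_K (K : ℝ) : Integrable (fun y : ℝ => K * ((1 + y ^ 2) * Real.exp (-y ^ 2))) := by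
  have h := ((integrable_moment 0).add (integrable_moment 2)).const_mul K
  refine h.congr (Eventually.of_forall fun y => ?_)
  simp only [Pi.add_apply]
  ring

lemma tendsto_K (K : ℝ) :
    Tendsto (fun y : ℝ => K * ((1 + y ^ 2) * Real.exp (-y ^ 2))) atTop (𝓝 0) := by
  have h : Tendsto (fun u : ℝ => K * (Real.exp (-u) + u ^ 1 * Real.exp (-u))) atTop (𝓝 0) := by
    have h1 := Real.tendsto_pow_mul_exp_neg_atTop_nhds_zero 1
    have h0 := Real.tendsto_pow_mul_exp_neg_atTop_nhds_zero 0
    have := (h0.add h1).const_mul K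
    simpa using this
  have h2 := h.comp (tendsto_pow_atTop (α := ℝ) (n := 2) two_ne_zero)
  refine h2.congr fun y => ?_
  simp only [Function.comp]
  ring

/-- Shifting a vertical line of integration. -/
lemma line_shift {h : ℂ → ℂ} {c₁ c₂ K : ℝ} (hc₁ : 0 < c₁) (hc : c₁ ≤ c₂)
    (hd : DifferentiableOn ℂ h {z | 0 < z.re})
    (hb : ∀ σ ∈ Icc c₁ c₂, ∀ y : ℝ,
      ‖h (σ + y * Complex.I)‖ ≤ K * ((1 + y ^ 2) * Real.exp (-y ^ 2))) :
    ∫ y : ℝ, h (c₁ + y * Complex.I) = ∫ y : ℝ, h (c₂ + y * Complex.I) := by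
  have hint : ∀ σ ∈ Icc c₁ c₂, Integrable (fun y : ℝ => h (σ + y * Complex.I)) := by
    intro σ hσ
    refine (integrable_K K).mono' ?_ (Eventually.of_forall (hb σ hσ))
    apply Continuous.aestronglyMeasurable
    refine hd.continuousOn.comp_continuous (by fun_prop) fun y => ?_
    simpa using lt_of_lt_of_le hc₁ hσ.1
  have h1 := intervalIntegral_tendsto_integral (hint c₁ ⟨le_rfl, hc⟩) tendsto_neg_atTop_atBot tendsto_id
  have h2 := intervalIntegral_tendsto_integral (hint c₂ ⟨hc, le_rfl⟩) tendsto_neg_atTop_atBot tendsto_id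
  have hdiff : Tendsto (fun T : ℝ => Complex.I * (∫ y in (-T)..T, h (c₂ + y * Complex.I))
      - Complex.I * ∫ y in (-T)..T, h (c₁ + y * Complex.I)) atTop (𝓝 0) := by
    have hbound : Tendsto (fun T : ℝ => 2 * |c₂ - c₁| * (K * ((1 + T ^ 2) * Real.exp (-T ^ 2))))
        atTop (𝓝 0) := by simpa using (tendsto_K K).const_mul (2 * |c₂ - c₁|)
    refine squeeze_zero_norm' (Eventually.of_forall fun T => ?_) hbound
    have rect := Complex.integral_boundary_rect_eq_zero_of_differentiableOn h
      (c₁ + (-T : ℝ) * Complex.I) (c₂ + T * Complex.I) (hd.mono ?_)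
    · simp only [Complex.add_re, Complex.ofReal_re, Complex.mul_re, Complex.I_re, mul_zero,
        Complex.ofReal_im, Complex.I_im, mul_one, sub_self, add_zero, Complex.add_im,
        Complex.mul_im, zero_add, smul_eq_mul] at rect
      have e : Complex.I * (∫ y in (-T)..T, h (c₂ + y * Complex.I))
          - Complex.I * ∫ y in (-T)..T, h (c₁ + y * Complex.I)
          = (∫ x in c₁..c₂, h (x + T * Complex.I))
            - ∫ x in c₁..c₂, h (x + (-T : ℝ) * Complex.I) := by
        linear_combination rect
      rw [e]
      have b1 : ‖∫ x in c₁..c₂, h (x + T * Complex.I)‖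
          ≤ (K * ((1 + T ^ 2) * Real.exp (-T ^ 2))) * |c₂ - c₁| := by
        refine intervalIntegral.norm_integral_le_of_norm_le_const fun x hx => ?_
        rw [uIoc_of_le hc] at hx
        exact hb x ⟨hx.1.le, hx.2⟩ T
      have b2 : ‖∫ x in c₁..c₂, h (x + (-T : ℝ) * Complex.I)‖
          ≤ (K * ((1 + T ^ 2) * Real.exp (-T ^ 2))) * |c₂ - c₁| := by
        refine intervalIntegral.norm_integral_le_of_norm_le_const fun x hx => ?_
        rw [uIoc_of_le hc] at hx
        have := hb x ⟨hx.1.le, hx.2⟩ (-T)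
        simpa using this
      refine (norm_sub_le _ _).trans ?_
      linarith
    · intro z hz
      have := hz.1
      simp only [mem_preimage, Complex.add_re, Complex.ofReal_re, Complex.mul_re, Complex.I_re,
        mul_zero, Complex.ofReal_im, Complex.I_im, mul_one, sub_self, add_zero,
        uIcc_of_le hc] at this
      exact lt_of_lt_of_le hc₁ this.1
  have h3 := (h2.const_mul Complex.I).sub (h1.const_mul Complex.I)
  have h4 := tendsto_nhds_unique h3 hdiff
  rw [← mul_sub] at h4
  have h5 := (mul_eq_zero.1 h4).resolve_left Complex.I_ne_zero
  exact (sub_eq_zero.1 h5).symm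

lemma re_q {c : ℝ} (y : ℝ) : ((c : ℂ) + y * Complex.I).re = c := by simp
lemma im_q {c : ℝ} (y : ℝ) : ((c : ℂ) + y * Complex.I).im = y := by simp
lemma normSq_q (c y : ℝ) : ‖(c : ℂ) + y * Complex.I‖ ^ 2 = c ^ 2 + y ^ 2 := by
  rw [← Complex.normSq_eq_norm_sq, Complex.normSq_apply, re_q, im_q]; ring
lemma q_ne {c : ℝ} (hc : 0 < c) (y : ℝ) : (c : ℂ) + y * Complex.I ≠ 0 := by
  intro h
  have := congrArg Complex.re h
  rw [re_q] at this
  simp at this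
  exact hc.ne' this
lemma le_norm_q {c : ℝ} (hc : 0 < c) (y : ℝ) : c ≤ ‖(c : ℂ) + y * Complex.I‖ := by
  have := Complex.re_le_norm ((c : ℂ) + y * Complex.I)
  rwa [re_q] at this

lemma norm_cexp_log {q : ℂ} (hq : q ≠ 0) (a : ℝ) :
    ‖Complex.exp (a * Complex.log q)‖ = ‖q‖ ^ a := by
  rw [Complex.norm_exp, Real.rpow_def_of_pos (norm_pos_iff.2 hq)]
  simp [Complex.log_re]
  ring

lemma continuous_log_q {c : ℝ} (hc : 0 < c) :
    Continuous (fun y : ℝ => Complex.log (c + y * Complex.I)) := by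
  refine Continuous.clog (by fun_prop) fun y => Or.inl ?_
  rw [re_q]; exact hc

lemma norm_q_le {c : ℝ} (y : ℝ) (hc : 0 < c) : ‖(c : ℂ) + y * Complex.I‖ ≤ (c + 1) * (1 + y ^ 2) := by
  have h := norm_add_le (c : ℂ) (y * Complex.I)
  simp only [norm_mul, Complex.norm_I, Complex.norm_real, mul_one, Real.norm_eq_abs, abs_of_pos hc] at h
  have : |y| ≤ 1 + y ^ 2 := by
    rcases abs_cases y with ⟨h1, _⟩ | ⟨h1, _⟩ <;> rw [h1] <;> nlinarith [sq_nonneg (y-1), sq_nonneg (y+1)]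
  nlinarith [sq_nonneg y, mul_nonneg hc.le (sq_nonneg y)]

/-- Extension of the Hankel formula by one integration by parts. -/
lemma hankel' {s c : ℝ} (hs : 0 < s) (hc : 0 < c) :
    Integrable (fun y : ℝ => Complex.exp ((c + y * Complex.I) ^ 2)
        * (Complex.exp (((-(2 * s) : ℝ)) * Complex.log (c + y * Complex.I)) * (c + y * Complex.I))) ∧
    ∫ y : ℝ, Complex.exp ((c + y * Complex.I) ^ 2)
        * (Complex.exp (((-(2 * s) : ℝ)) * Complex.log (c + y * Complex.I)) * (c + y * Complex.I))
      = ((π * s / Real.Gamma (s + 1) : ℝ) : ℂ) := by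
  have hlog := continuous_log_q hc
  have hpow : ∀ y : ℝ, ‖(c : ℂ) + y * Complex.I‖ ^ (-(2 * s)) ≤ c ^ (-(2 * s)) := fun y =>
    Real.rpow_le_rpow_of_nonpos hc (le_norm_q hc y) (by linarith)
  have hexp : ∀ y : ℝ, Real.exp (c ^ 2 - y ^ 2) = Real.exp (c ^ 2) * Real.exp (-y ^ 2) := fun y => by
    rw [← Real.exp_add]; congr 1
  have hG : ∀ y : ℝ, ‖Complex.exp ((c + y * Complex.I) ^ 2)
      * Complex.exp (((-(2 * s) : ℝ)) * Complex.log (c + y * Complex.I))‖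
      ≤ (Real.exp (c ^ 2) * c ^ (-(2 * s))) * ((1 + y ^ 2) * Real.exp (-y ^ 2)) := by
    intro y
    rw [norm_mul, norm_exp_sq, norm_cexp_log (q_ne hc y), hexp]
    have h1 := hpow y
    have h2 : 0 ≤ Real.exp (c ^ 2) * Real.exp (-y ^ 2) := by positivity
    have h3 : 0 ≤ Real.exp (c ^ 2) * c ^ (-(2 * s)) * Real.exp (-y ^ 2) * y ^ 2 := by positivity
    nlinarith [mul_le_mul_of_nonneg_left h1 h2]
  have int1 : Integrable (fun y : ℝ => Complex.exp ((c + y * Complex.I) ^ 2)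
        * (Complex.exp (((-(2 * s) : ℝ)) * Complex.log (c + y * Complex.I)) * (c + y * Complex.I))) := by
    refine (integrable_K (Real.exp (c ^ 2) * c ^ (-(2 * s)) * (c + 1))).mono' ?_ ?_
    · apply Continuous.aestronglyMeasurable; fun_prop
    · refine Eventually.of_forall fun y => ?_
      rw [norm_mul, norm_mul, norm_exp_sq, norm_cexp_log (q_ne hc y), hexp]
      have h1 := mul_le_mul (hpow y) (norm_q_le y hc) (norm_nonneg _) (by positivity)
      have h2 : 0 ≤ Real.exp (c ^ 2) * Real.exp (-y ^ 2) := by positivity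
      nlinarith [mul_le_mul_of_nonneg_left h1 h2]
  have int2 : Integrable (fun y : ℝ => Complex.exp ((c + y * Complex.I) ^ 2)
        * Complex.exp (-((2 * s + 1 : ℝ) * Complex.log (c + y * Complex.I)))) := by
    by_contra hni
    have h := hankel (b := 2 * s + 1) (by linarith) hc
    rw [integral_undef hni] at h
    have : π / Real.Gamma ((2 * s + 1 + 1) / 2) ≠ 0 :=
      div_ne_zero pi_ne_zero (Real.Gamma_pos_of_pos (by linarith)).ne'
    exact this (by exact_mod_cast h.symm)
  refine ⟨int1, ?_⟩
  have htop : Tendsto (fun y : ℝ => Complex.exp ((c + y * Complex.I) ^ 2)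
      * Complex.exp (((-(2 * s) : ℝ)) * Complex.log (c + y * Complex.I))) atTop (𝓝 0) :=
    squeeze_zero_norm hG (tendsto_K _)
  have hbot : Tendsto (fun y : ℝ => Complex.exp ((c + y * Complex.I) ^ 2)
      * Complex.exp (((-(2 * s) : ℝ)) * Complex.log (c + y * Complex.I))) atBot (𝓝 0) := by
    refine squeeze_zero_norm hG ?_
    have := (tendsto_K (Real.exp (c ^ 2) * c ^ (-(2 * s)))).comp tendsto_neg_atBot_atTop
    refine this.congr fun y => ?_
    simp [Function.comp]
  have hder : ∀ y : ℝ, HasDerivAt (fun y : ℝ => Complex.exp ((c + y * Complex.I) ^ 2)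
      * Complex.exp (((-(2 * s) : ℝ)) * Complex.log (c + y * Complex.I)))
      (2 * Complex.I * (Complex.exp ((c + y * Complex.I) ^ 2)
        * (Complex.exp (((-(2 * s) : ℝ)) * Complex.log (c + y * Complex.I)) * (c + y * Complex.I)))
       - 2 * s * Complex.I * (Complex.exp ((c + y * Complex.I) ^ 2)
        * Complex.exp (-((2 * s + 1 : ℝ) * Complex.log (c + y * Complex.I))))) y := by
    intro y
    have hq : HasDerivAt (fun y : ℝ => (c : ℂ) + y * Complex.I) Complex.I y := by
      have h0 : HasDerivAt (fun y : ℝ => (y : ℂ)) 1 y := Complex.ofRealCLM.hasDerivAt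
      simpa using (h0.mul_const Complex.I).const_add (c : ℂ)
    have hl : HasDerivAt (fun y : ℝ => Complex.log ((c : ℂ) + y * Complex.I))
        (Complex.I / (c + y * Complex.I)) y := hq.clog_real (Or.inl (by rw [re_q]; exact hc))
    have h1 := (hq.pow 2).cexp
    have h2 := (hl.const_mul (((-(2 * s) : ℝ)) : ℂ)).cexp
    refine (h1.mul h2).congr_deriv ?_
    have e : Complex.exp (-((2 * s + 1 : ℝ) * Complex.log (c + y * Complex.I)))
        = Complex.exp (((-(2 * s) : ℝ)) * Complex.log (c + y * Complex.I)) / (c + y * Complex.I) := by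
      rw [eq_div_iff (q_ne hc y)]
      nth_rewrite 2 [← Complex.exp_log (q_ne hc y)]
      rw [← Complex.exp_add]
      congr 1; push_cast; ring
    rw [e]
    have := q_ne hc y
    simp only [Pi.pow_apply]
    push_cast
    field_simp
    ring
  have ftc := integral_of_hasDerivAt_of_tendsto hder ((int1.const_mul _).sub (int2.const_mul _)) hbot htop
  rw [integral_sub (int1.const_mul _) (int2.const_mul _), integral_const_mul, integral_const_mul] at ftc
  have hk := hankel (b := 2 * s + 1) (by linarith) hc
  rw [show (2 * s + 1 + 1) / 2 = s + 1 by ring] at hk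
  rw [hk, sub_self] at ftc
  have : (2 * Complex.I) ≠ 0 := by simp
  apply mul_left_cancel₀ this
  rw [sub_eq_zero.1 ftc]
  push_cast
  ring
end ML

namespace ML
open MeasureTheory Filter Topology

/-- The quantity `r * q ^ (2 ρ)`. -/
noncomputable def Vf (r ρ : ℝ) (q : ℂ) : ℂ := r * Complex.exp ((2 * ρ : ℝ) * Complex.log q)

lemma norm_Vf {r ρ : ℝ} {q : ℂ} (hr : 0 ≤ r) (hq : q ≠ 0) : ‖Vf r ρ q‖ = r * ‖q‖ ^ (2 * ρ) := by
  rw [Vf, norm_mul, norm_cexp_log hq, Complex.norm_real, Real.norm_of_nonneg hr]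

lemma one_add_V_lower {r ρ c : ℝ} (hr : 0 ≤ r) (h0 : 0 ≤ ρ) (h1 : ρ ≤ 1) (hc : 0 < c) (y : ℝ) :
    1 ≤ (1 + y ^ 2 / (2 * c ^ 2)) * ‖1 + Vf r ρ (c + y * Complex.I)‖ ^ 2 := by
  set q : ℂ := c + y * Complex.I with hq
  have hqn : 0 < ‖q‖ := norm_pos_iff.2 (q_ne hc y)
  set φ := |Complex.arg q| with hφ
  set R := r * Real.exp (2 * ρ * Real.log ‖q‖) with hR
  have hRn : 0 ≤ R := by positivity
  have hnorm : ‖1 + Vf r ρ q‖ ^ 2 = 1 + 2 * R * Real.cos (2 * ρ * φ) + R ^ 2 := by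
    have hre : (Vf r ρ q).re = R * Real.cos (2 * ρ * Complex.arg q) := by
      rw [Vf, Complex.re_ofReal_mul, Complex.exp_re, Complex.re_ofReal_mul, Complex.im_ofReal_mul,
        Complex.log_re, Complex.log_im, hR]; ring
    have him : (Vf r ρ q).im = R * Real.sin (2 * ρ * Complex.arg q) := by
      rw [Vf, Complex.im_ofReal_mul, Complex.exp_im, Complex.re_ofReal_mul, Complex.im_ofReal_mul,
        Complex.log_re, Complex.log_im, hR]; ring
    have hcos : Real.cos (2 * ρ * φ) = Real.cos (2 * ρ * Complex.arg q) := by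
      rw [← Real.cos_abs (2 * ρ * Complex.arg q), abs_mul, abs_of_nonneg (by positivity : 0 ≤ 2 * ρ)]
    rw [← Complex.normSq_eq_norm_sq, Complex.normSq_apply, Complex.add_re, Complex.add_im, hre, him,
      hcos]
    simp only [Complex.one_re, Complex.one_im]
    linear_combination R ^ 2 * Real.sin_sq_add_cos_sq (2 * ρ * Complex.arg q)
  rw [hnorm]
  set θ := 2 * ρ * φ with hθ
  have hA : 0 ≤ y ^ 2 / (2 * c ^ 2) := by positivity
  rcases le_or_gt 0 (Real.cos θ) with hcs | hcs
  · have : 0 ≤ 2 * R * Real.cos θ + R ^ 2 := by positivity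
    nlinarith
  · have hφ2 : φ ≤ π / 2 := by
      rw [hφ, Complex.abs_arg_le_pi_div_two_iff, hq, re_q]; exact hc.le
    have hφ0 : 0 ≤ φ := abs_nonneg _
    have hle : Real.cos (2 * φ) ≤ Real.cos θ := by
      apply Real.cos_le_cos_of_nonneg_of_le_pi
      · positivity
      · linarith
      · rw [hθ]; nlinarith
    have hcos2 : Real.cos (2 * φ) * (c ^ 2 + y ^ 2) = c ^ 2 - y ^ 2 := by
      have h3 : Real.cos φ = c / ‖q‖ := by
        rw [hφ, Real.cos_abs, Complex.cos_arg (q_ne hc y), hq, re_q]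
      rw [Real.cos_two_mul, h3, div_pow, hq, normSq_q]
      have : c ^ 2 + y ^ 2 ≠ 0 := by positivity
      field_simp
      ring
    set d := Real.cos (2 * φ) with hd
    have hsq : Real.cos θ ^ 2 ≤ d ^ 2 := by nlinarith
    have hmin : 1 - d ^ 2 ≤ 1 + 2 * R * Real.cos θ + R ^ 2 := by
      nlinarith [sq_nonneg (R + Real.cos θ)]
    have hQ : 0 < c ^ 2 + y ^ 2 := by positivity
    have hyc : c ^ 2 ≤ y ^ 2 := by nlinarith
    have hd2 : (1 - d ^ 2) * (c ^ 2 + y ^ 2) ^ 2 = 4 * c ^ 2 * y ^ 2 := by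
      have : (d * (c ^ 2 + y ^ 2)) ^ 2 = (c ^ 2 - y ^ 2) ^ 2 := by rw [hcos2]
      linear_combination -this
    have hfin : 1 ≤ (1 + y ^ 2 / (2 * c ^ 2)) * (1 - d ^ 2) := by
      have h5 : 1 - d ^ 2 = 4 * c ^ 2 * y ^ 2 / (c ^ 2 + y ^ 2) ^ 2 := by
        rw [eq_div_iff (by positivity), hd2]
      have h6 : (1 + y ^ 2 / (2 * c ^ 2)) * (1 - d ^ 2)
          = (2 * (2 * c ^ 2 + y ^ 2) * y ^ 2) / (c ^ 2 + y ^ 2) ^ 2 := by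
        rw [h5]; field_simp; ring
      rw [h6, one_le_div (by positivity)]
      nlinarith [mul_nonneg (sq_nonneg c) (sub_nonneg.2 hyc), mul_nonneg (sq_nonneg y) (sub_nonneg.2 hyc)]
    have hA' : 0 ≤ 1 + y ^ 2 / (2 * c ^ 2) := by linarith
    exact hfin.trans (mul_le_mul_of_nonneg_left hmin hA')

lemma one_add_V_ne {r ρ c : ℝ} (hr : 0 ≤ r) (h0 : 0 ≤ ρ) (h1 : ρ ≤ 1) (hc : 0 < c) (y : ℝ) :
    1 + Vf r ρ (c + y * Complex.I) ≠ 0 := by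
  intro h
  have := one_add_V_lower hr h0 h1 hc y
  rw [h] at this
  norm_num at this

lemma inv_sq_le {r ρ c : ℝ} (hr : 0 ≤ r) (h0 : 0 ≤ ρ) (h1 : ρ ≤ 1) (hc : 0 < c) (y : ℝ) :
    (‖1 + Vf r ρ (c + y * Complex.I)‖ ^ 2)⁻¹ ≤ 1 + y ^ 2 / (2 * c ^ 2) := by
  have h := one_add_V_lower hr h0 h1 hc y
  have hp : 0 < ‖1 + Vf r ρ (c + y * Complex.I)‖ ^ 2 := by
    have := norm_pos_iff.2 (one_add_V_ne hr h0 h1 hc y); positivity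
  rw [inv_le_iff_one_le_mul₀ hp]
  exact h

lemma inv_le' {r ρ c : ℝ} (hr : 0 ≤ r) (h0 : 0 ≤ ρ) (h1 : ρ ≤ 1) (hc : 0 < c) (y : ℝ) :
    ‖1 + Vf r ρ (c + y * Complex.I)‖⁻¹ ≤ 1 + y ^ 2 / (4 * c ^ 2) := by
  have h := inv_sq_le hr h0 h1 hc y
  rw [← inv_pow] at h
  have e : y ^ 2 / (2 * c ^ 2) = 2 * (y ^ 2 / (4 * c ^ 2)) := by field_simp; norm_num
  rw [e] at h
  nlinarith [sq_nonneg (‖1 + Vf r ρ (c + y * Complex.I)‖⁻¹ - 1)]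

lemma differentiableAt_Vf (r ρ : ℝ) {q : ℂ} (hq : 0 < q.re) : DifferentiableAt ℂ (Vf r ρ) q := by
  have := Complex.differentiableAt_log (z := q) (Or.inl hq)
  unfold Vf
  fun_prop

/-- The integrand. -/
noncomputable def kern (r ρ : ℝ) (q : ℂ) : ℂ :=
  Complex.exp (q ^ 2) * (q⁻¹ * (Vf r ρ q / (1 + Vf r ρ q)))

lemma kern_bound {r ρ c : ℝ} (hr : 0 ≤ r) (h0 : 0 ≤ ρ) (h1 : ρ ≤ 1) (hc : 0 < c) (y : ℝ) :
    ‖kern r ρ (c + y * Complex.I)‖ ≤ Real.exp (c ^ 2 - y ^ 2) * (c⁻¹ * (2 + y ^ 2 / (4 * c ^ 2))) := by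
  have hne := one_add_V_ne hr h0 h1 hc y
  rw [kern, norm_mul, norm_exp_sq, norm_mul, norm_inv]
  have h2 : ‖Vf r ρ (c + y * Complex.I) / (1 + Vf r ρ (c + y * Complex.I))‖
      ≤ 2 + y ^ 2 / (4 * c ^ 2) := by
    have : Vf r ρ (c + y * Complex.I) / (1 + Vf r ρ (c + y * Complex.I))
        = 1 - (1 + Vf r ρ (c + y * Complex.I))⁻¹ := by
      field_simp; ring
    rw [this]
    refine (norm_sub_le _ _).trans ?_
    rw [norm_inv, norm_one]
    linarith [inv_le' hr h0 h1 hc y]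
  have h3 : ‖(c : ℂ) + y * Complex.I‖⁻¹ ≤ c⁻¹ := inv_anti₀ hc (le_norm_q hc y)
  gcongr

lemma kern_shift {r ρ c₁ c₂ : ℝ} (hr : 0 ≤ r) (h0 : 0 ≤ ρ) (h1 : ρ ≤ 1) (hc : 0 < c₁) (h12 : c₁ ≤ c₂) :
    ∫ y : ℝ, kern r ρ (c₁ + y * Complex.I) = ∫ y : ℝ, kern r ρ (c₂ + y * Complex.I) := by
  refine line_shift (K := Real.exp (c₂ ^ 2) * (c₁⁻¹ * (2 + 1 / (4 * c₁ ^ 2)))) hc h12 ?_ ?_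
  · intro z hz
    have hz' : 0 < z.re := hz
    have hne : 1 + Vf r ρ z ≠ 0 := by
      have := one_add_V_ne hr h0 h1 hz' z.im
      rwa [Complex.re_add_im] at this
    have hz0 : z ≠ 0 := by rintro rfl; simp at hz'
    have hV := differentiableAt_Vf r ρ hz'
    refine DifferentiableAt.differentiableWithinAt ?_
    unfold kern
    have e1 : DifferentiableAt ℂ (fun q : ℂ => Vf r ρ q / (1 + Vf r ρ q)) z :=
      hV.div (hV.const_add 1) hne
    have e2 : DifferentiableAt ℂ (fun q : ℂ => q⁻¹) z := differentiableAt_inv hz0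
    have e3 : DifferentiableAt ℂ (fun q : ℂ => Complex.exp (q ^ 2)) z := by fun_prop
    exact e3.mul (e2.mul e1)
  · intro σ hσ y
    have hσ0 : 0 < σ := lt_of_lt_of_le hc hσ.1
    refine (kern_bound hr h0 h1 hσ0 y).trans ?_
    have a1 : Real.exp (σ ^ 2 - y ^ 2) ≤ Real.exp (c₂ ^ 2) * Real.exp (-y ^ 2) := by
      rw [← Real.exp_add]; apply Real.exp_le_exp.2
      nlinarith [hσ.2]
    have a2 : σ⁻¹ ≤ c₁⁻¹ := inv_anti₀ hc hσ.1
    have a3 : y ^ 2 / (4 * σ ^ 2) ≤ y ^ 2 / (4 * c₁ ^ 2) := by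
      have := hσ.1
      gcongr
    have a4 : 2 + y ^ 2 / (4 * σ ^ 2) ≤ (2 + 1 / (4 * c₁ ^ 2)) * (1 + y ^ 2) := by
      have : (2 + 1 / (4 * c₁ ^ 2)) * (1 + y ^ 2)
        = 2 + 2 * y ^ 2 + 1 / (4 * c₁ ^ 2) + y ^ 2 / (4 * c₁ ^ 2) := by ring
      rw [this]
      have : 0 ≤ 1 / (4 * c₁ ^ 2) := by positivity
      nlinarith [sq_nonneg y]
    calc Real.exp (σ ^ 2 - y ^ 2) * (σ⁻¹ * (2 + y ^ 2 / (4 * σ ^ 2)))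
        ≤ (Real.exp (c₂ ^ 2) * Real.exp (-y ^ 2)) * (c₁⁻¹ * ((2 + 1 / (4 * c₁ ^ 2)) * (1 + y ^ 2))) := by
          gcongr
      _ = _ := by ring

/-- Integral representation for large `c`. -/
lemma repr_large {ρ x c : ℝ} (hρ : 0 < ρ) (hx : 0 < x) (hc : 0 < c)
    (hlarge : x * c ^ (-(2 * ρ)) ≤ 1 / 2) :
    ∫ y : ℝ, kern x⁻¹ ρ (c + y * Complex.I) = ((π * mittagLeffler ρ (-x) : ℝ) : ℂ) := by
  have hlog := continuous_log_q hc
  set U : ℝ → ℂ := fun y => (x : ℂ) * Complex.exp ((-(2 * ρ) : ℝ) * Complex.log (c + y * Complex.I)) with hU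
  have hUn : ∀ y, ‖U y‖ ≤ 1 / 2 := by
    intro y
    simp only [hU]
    rw [norm_mul, norm_cexp_log (q_ne hc y), Complex.norm_real, Real.norm_of_nonneg hx.le]
    have := Real.rpow_le_rpow_of_nonpos hc (le_norm_q hc y) (z := -(2 * ρ)) (by linarith)
    nlinarith
  have hUc : Continuous U := by simp only [hU]; fun_prop
  have hUV : ∀ y, U y * Vf x⁻¹ ρ (c + y * Complex.I) = 1 := by
    intro y
    simp only [hU, Vf]
    have : (x : ℂ) ≠ 0 := by exact_mod_cast hx.ne'
    calc _ = ((x : ℂ) * ((x⁻¹ : ℝ) : ℂ)) * (Complex.exp ((-(2 * ρ) : ℝ) * Complex.log (c + y * Complex.I))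
        * Complex.exp ((2 * ρ : ℝ) * Complex.log (c + y * Complex.I))) := by ring
      _ = 1 := by
        rw [← Complex.exp_add]
        push_cast
        rw [mul_inv_cancel₀ this, one_mul]
        ring_nf
        exact Complex.exp_zero
  set F : ℕ → ℝ → ℂ := fun k y => Complex.exp ((c + y * Complex.I) ^ 2) *
    (((c : ℂ) + y * Complex.I)⁻¹ * (-U y) ^ k) with hF
  have hFn : ∀ k y, ‖F k y‖ ≤ (1 / 2) ^ k * (c⁻¹ * Real.exp (c ^ 2 - y ^ 2)) := by
    intro k y
    simp only [hF]
    rw [norm_mul, norm_exp_sq, norm_mul, norm_inv, norm_pow, norm_neg]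
    have h3 : ‖(c : ℂ) + y * Complex.I‖⁻¹ ≤ c⁻¹ := inv_anti₀ hc (le_norm_q hc y)
    calc _ ≤ Real.exp (c ^ 2 - y ^ 2) * (c⁻¹ * (1 / 2) ^ k) := by
          have := hUn y
          gcongr
      _ = _ := by ring
  have hcont : ∀ k, Continuous (F k) := by
    intro k
    have h1 : Continuous (fun y : ℝ => ((c : ℂ) + y * Complex.I)⁻¹) :=
      Continuous.inv₀ (by fun_prop) (fun y => q_ne hc y)
    simp only [hF]
    fun_prop
  have hFi : ∀ k, Integrable (F k) := fun k =>
    (((integrable_gauss c).const_mul c⁻¹).const_mul ((1 / 2) ^ k)).mono'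
      (hcont k).aestronglyMeasurable (Eventually.of_forall (hFn k))
  have hsum : Summable fun k => ∫ y, ‖F k y‖ := by
    refine Summable.of_nonneg_of_le (fun k => integral_nonneg fun y => norm_nonneg _) (fun k => ?_)
      ((summable_geometric_of_lt_one (by norm_num) (by norm_num : (1/2 : ℝ) < 1)).mul_right
        (∫ y : ℝ, c⁻¹ * Real.exp (c ^ 2 - y ^ 2)))
    rw [← integral_const_mul]
    exact integral_mono (hFi k).norm (((integrable_gauss c).const_mul c⁻¹).const_mul ((1 / 2) ^ k)) (hFn k)
  have key := hasSum_integral_of_summable_integral_norm hFi hsum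
  have hts : ∀ y, ∑' k, F k y = kern x⁻¹ ρ (c + y * Complex.I) := by
    intro y
    simp only [hF]
    rw [tsum_mul_left, tsum_mul_left, tsum_geometric_of_norm_lt_one (by
      rw [norm_neg]; exact lt_of_le_of_lt (hUn y) (by norm_num)), kern]
    congr 2
    have h := hUV y
    set V := Vf x⁻¹ ρ (c + y * Complex.I)
    have hV0 : V ≠ 0 := right_ne_zero_of_mul (h.trans_ne one_ne_zero)
    have hU0 : 1 + U y ≠ 0 := by
      intro h0
      have h1 : U y = -1 := by linear_combination h0
      have h2 := hUn y
      rw [h1] at h2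
      norm_num at h2
    have hVV : 1 + V = V * (1 + U y) := by linear_combination -h
    rw [hVV, sub_neg_eq_add]
    field_simp
  have hint : ∀ k, ∫ y, F k y = ((π * ((-x) ^ k / Real.Gamma (ρ * k + 1)) : ℝ) : ℂ) := by
    intro k
    have hk := hankel (b := 2 * ρ * k + 1) (c := c) (by positivity) hc
    rw [show (2 * ρ * k + 1 + 1) / 2 = ρ * k + 1 by ring] at hk
    have e : ∀ y, F k y = ((-x : ℝ) : ℂ) ^ k * (Complex.exp ((c + y * Complex.I) ^ 2)
        * Complex.exp (-((2 * ρ * k + 1 : ℝ) * Complex.log (c + y * Complex.I)))) := by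
      intro y
      simp only [hF, hU]
      have hq := q_ne hc y
      have e1 : Complex.exp (-((2 * ρ * k + 1 : ℝ) * Complex.log (c + y * Complex.I)))
        = ((c : ℂ) + y * Complex.I)⁻¹ *
          Complex.exp ((-(2 * ρ) : ℝ) * Complex.log (c + y * Complex.I)) ^ k := by
        nth_rewrite 2 [← Complex.exp_log hq]
        rw [← Complex.exp_neg, ← Complex.exp_nat_mul, ← Complex.exp_add]
        congr 1
        push_cast; ring
      rw [e1, ← neg_mul, mul_pow]
      push_cast; ring
    simp_rw [e]
    rw [integral_const_mul, hk]
    push_cast; ring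
  simp_rw [hts, hint] at key
  rw [← key.tsum_eq, ← Complex.ofReal_tsum, tsum_mul_left, mittagLeffler]

lemma repr_ML {ρ x c : ℝ} (hρ : 0 < ρ) (hρ1 : ρ ≤ 1) (hx : 0 < x) (hc : 0 < c) :
    ∫ y : ℝ, kern x⁻¹ ρ (c + y * Complex.I) = ((π * mittagLeffler ρ (-x) : ℝ) : ℂ) := by
  set c₂ := max c ((2 * x) ^ (1 / (2 * ρ))) with hc₂
  have hc2 : c ≤ c₂ := le_max_left _ _
  rw [kern_shift (inv_nonneg.2 hx.le) hρ.le hρ1 hc hc2]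
  refine repr_large hρ hx (lt_of_lt_of_le hc hc2) ?_
  have h1 : c₂ ^ (-(2 * ρ)) ≤ ((2 * x) ^ (1 / (2 * ρ))) ^ (-(2 * ρ)) :=
    Real.rpow_le_rpow_of_nonpos (by positivity) (le_max_right _ _) (by linarith)
  have h2 : ((2 * x) ^ (1 / (2 * ρ))) ^ (-(2 * ρ)) = (2 * x)⁻¹ := by
    rw [← Real.rpow_mul (by positivity), show 1 / (2 * ρ) * (-(2 * ρ)) = -1 by field_simp,
      Real.rpow_neg_one]
  rw [h2] at h1
  calc x * c₂ ^ (-(2 * ρ)) ≤ x * (2 * x)⁻¹ := mul_le_mul_of_nonneg_left h1 hx.le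
    _ = 1 / 2 := by field_simp
end ML

namespace ML
open MeasureTheory Filter Topology

lemma poly_gauss (a0 a1 a2 a3 a4 : ℝ) :
    Integrable (fun y : ℝ => (a0 + a1 * y ^ 2 + a2 * y ^ 4 + a3 * y ^ 6 + a4 * y ^ 8) * Real.exp (-y ^ 2)) ∧
    ∫ y : ℝ, (a0 + a1 * y ^ 2 + a2 * y ^ 4 + a3 * y ^ 6 + a4 * y ^ 8) * Real.exp (-y ^ 2)
      = √π * (a0 + a1 / 2 + a2 * (3 / 4) + a3 * (15 / 8) + a4 * (105 / 16)) := by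
  obtain ⟨m0, m1, m2, m3, m4⟩ := moments
  have i0 : Integrable (fun y : ℝ => Real.exp (-y ^ 2)) := by simpa using integrable_moment 0
  have i1 := integrable_moment 2
  have i2 := integrable_moment 4
  have i3 := integrable_moment 6
  have i4 := integrable_moment 8
  have j0 := i0.const_mul a0
  have j1 := i1.const_mul a1
  have j2 := i2.const_mul a2
  have j3 := i3.const_mul a3
  have j4 := i4.const_mul a4
  have e : (fun y : ℝ => (a0 + a1 * y ^ 2 + a2 * y ^ 4 + a3 * y ^ 6 + a4 * y ^ 8) * Real.exp (-y ^ 2))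
    = fun y : ℝ => (((a0 * Real.exp (-y ^ 2) + a1 * (y ^ 2 * Real.exp (-y ^ 2)))
      + a2 * (y ^ 4 * Real.exp (-y ^ 2))) + a3 * (y ^ 6 * Real.exp (-y ^ 2)))
      + a4 * (y ^ 8 * Real.exp (-y ^ 2)) := by
    ext y; ring
  have k1 := j0.add j1
  have k2 := k1.add j2
  have k3 := k2.add j3
  have k4 := k3.add j4
  rw [e]
  refine ⟨k4, ?_⟩
  rw [integral_add (by exact k3) j4, integral_add (by exact k2) j3, integral_add (by exact k1) j2, integral_add j0 j1]
  simp only [integral_const_mul, m0, m1, m2, m3, m4]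
  ring

lemma poly_gauss' (p0 p1 p2 m : ℝ) :
    Integrable (fun y : ℝ => ((p0 + p1 * y ^ 2 + p2 * y ^ 4) * ((2 + 3 * y ^ 2) * (m + y ^ 2)))
      * Real.exp (-y ^ 2)) ∧
    ∫ y : ℝ, ((p0 + p1 * y ^ 2 + p2 * y ^ 4) * ((2 + 3 * y ^ 2) * (m + y ^ 2))) * Real.exp (-y ^ 2)
      = √π * (2 * m * p0 + ((3 * m + 2) * p0 + 2 * m * p1) / 2
        + (3 * p0 + (3 * m + 2) * p1 + 2 * m * p2) * (3 / 4)
        + (3 * p1 + (3 * m + 2) * p2) * (15 / 8) + (3 * p2) * (105 / 16)) := by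
  have h := poly_gauss (2 * m * p0) ((3 * m + 2) * p0 + 2 * m * p1)
    (3 * p0 + (3 * m + 2) * p1 + 2 * m * p2) (3 * p1 + (3 * m + 2) * p2) (3 * p2)
  have e : (fun y : ℝ => ((p0 + p1 * y ^ 2 + p2 * y ^ 4) * ((2 + 3 * y ^ 2) * (m + y ^ 2)))
      * Real.exp (-y ^ 2)) = fun y : ℝ => (2 * m * p0 + ((3 * m + 2) * p0 + 2 * m * p1) * y ^ 2
    + (3 * p0 + (3 * m + 2) * p1 + 2 * m * p2) * y ^ 4 + (3 * p1 + (3 * m + 2) * p2) * y ^ 6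
    + (3 * p2) * y ^ 8) * Real.exp (-y ^ 2) := by
    ext y; ring
  rw [e]; exact h

lemma digamma_le {u : ℝ} (h0 : 0 < u) (h2 : u ≤ 2) : deriv Real.Gamma u ≤ Real.Gamma u / 2 := by
  have hdG : ∀ x ∈ Ioi (0:ℝ), DifferentiableAt ℝ Real.Gamma x := fun x hx =>
    Real.differentiableAt_Gamma fun m h => by
      have h1 : (0:ℝ) < x := hx
      have h2 : (0:ℝ) ≤ m := Nat.cast_nonneg m
      linarith
  have hd : ∀ x ∈ Ioi (0:ℝ), HasDerivAt (Real.log ∘ Real.Gamma) (deriv Real.Gamma x / Real.Gamma x) x :=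
    fun x hx => (hdG x hx).hasDerivAt.log (Real.Gamma_pos_of_pos hx).ne'
  have hm := Real.convexOn_log_Gamma.monotoneOn_deriv (fun x hx => (hd x hx).differentiableAt)
  have h := hm (a := u) (b := 2) h0 (by simp) h2
  rw [(hd u h0).deriv, (hd 2 (by simp)).deriv, Real.Gamma_two] at h
  have h3 := Real.deriv_Gamma_nat 1
  norm_num [harmonic] at h3
  rw [h3] at h
  have := Real.one_half_lt_eulerMascheroniConstant
  have hp := Real.Gamma_pos_of_pos h0
  rw [div_le_iff₀ hp] at h
  nlinarith

lemma Gamma_le_one {u : ℝ} (h1 : 1 ≤ u) (h2 : u ≤ 2) : Real.Gamma u ≤ 1 := by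
  have h := Real.convexOn_Gamma.2 (show (1:ℝ) ∈ Ioi 0 by simp) (show (2:ℝ) ∈ Ioi 0 by simp)
    (show (0:ℝ) ≤ 2 - u by linarith) (show (0:ℝ) ≤ u - 1 by linarith) (by ring)
  simp only [smul_eq_mul, Real.Gamma_one, Real.Gamma_two] at h
  rw [show (2 - u) * 1 + (u - 1) * 2 = u by ring] at h
  linarith

lemma main_deriv {lam L ρ : ℝ} (hlam : 0 < lam) (hL : 0 ≤ L) (h0 : 0 < ρ) (h1 : ρ < 1) :
    ∃ D, HasDerivAt (fun ρ : ℝ => (lam * Real.exp (ρ * L))⁻¹ * ((1 - ρ) / Real.Gamma (2 - ρ))) D ρ ∧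
      D ≤ -((lam * Real.exp (ρ * L))⁻¹ * ((1 + ρ) / 2 + L * (1 - ρ))) := by
  have hu : 0 < 2 - ρ := by linarith
  have hG := Real.Gamma_pos_of_pos hu
  have hdG : HasDerivAt Real.Gamma (deriv Real.Gamma (2 - ρ)) (2 - ρ) :=
    (Real.differentiableAt_Gamma fun m h => by
      have h2 : (0:ℝ) ≤ m := Nat.cast_nonneg m
      linarith).hasDerivAt
  have h2 : HasDerivAt (fun ρ : ℝ => 2 - ρ) (-1) ρ := by
    simpa using (hasDerivAt_id ρ).const_sub 2
  have h3 : HasDerivAt (fun ρ : ℝ => 1 - ρ) (-1) ρ := by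
    simpa using (hasDerivAt_id ρ).const_sub 1
  have h4 := h3.div (hdG.comp ρ h2) hG.ne'
  have h5 : HasDerivAt (fun ρ : ℝ => lam * Real.exp (ρ * L)) (lam * (Real.exp (ρ * L) * L)) ρ :=
    ((hasDerivAt_mul_const L).exp).const_mul lam
  have hx : 0 < lam * Real.exp (ρ * L) := by positivity
  have h6 := (h5.inv hx.ne').mul h4
  refine ⟨_, h6, ?_⟩
  have hdig := digamma_le hu (by linarith : 2 - ρ ≤ 2)
  have hG1 := Gamma_le_one (by linarith : 1 ≤ 2 - ρ) (by linarith)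
  simp only [Function.comp, Pi.inv_apply, Pi.div_apply]
  set G := Real.Gamma (2 - ρ)
  set G' := deriv Real.Gamma (2 - ρ)
  set X := lam * Real.exp (ρ * L) with hX
  have e : -(lam * (Real.exp (ρ * L) * L)) / X ^ 2 * ((1 - ρ) / G)
      + X⁻¹ * ((-1 * G - (1 - ρ) * (G' * -1)) / G ^ 2)
      = -(X⁻¹ * ((L * (1 - ρ) * G + G - (1 - ρ) * G') / G ^ 2)) := by
    rw [← mul_assoc lam, ← hX]
    field_simp
    ring
  rw [e]
  apply neg_le_neg
  apply mul_le_mul_of_nonneg_left _ (by positivity)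
  rw [le_div_iff₀ (by positivity)]
  have hA : 0 ≤ (1 + ρ) / 2 + L * (1 - ρ) := by
    have : 0 ≤ L * (1 - ρ) := mul_nonneg hL (by linarith)
    linarith
  have hstep : ((1 + ρ) / 2 + L * (1 - ρ)) * G ≤ L * (1 - ρ) * G + G - (1 - ρ) * G' := by
    nlinarith
  have hstep2 : G ^ 2 ≤ G := by nlinarith
  nlinarith [mul_le_mul_of_nonneg_left hstep2 hA]

/-- `2 |log q|` is at most `4.6 + |q|^2` on the line `Re q = 1/2`. -/
lemma log_bound (y : ℝ) :
    ‖2 * Complex.log (((1/2 : ℝ) : ℂ) + y * Complex.I)‖ ≤ 4.85 + y ^ 2 := by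
  have hQ := normSq_q (1/2) y
  have hqn := le_norm_q (show (0:ℝ) < 1/2 by norm_num) y
  set q : ℂ := ((1/2 : ℝ) : ℂ) + y * Complex.I with hq
  have h1 : ‖Complex.log q‖ ≤ |Real.log ‖q‖| + |Complex.arg q| := by
    have := Complex.norm_le_abs_re_add_abs_im (Complex.log q)
    rwa [Complex.log_re, Complex.log_im] at this
  have h2 : |Complex.arg q| ≤ π / 2 := by
    rw [Complex.abs_arg_le_pi_div_two_iff, hq, re_q]; norm_num
  have h3 : 2 * |Real.log ‖q‖| = |Real.log (‖q‖ ^ 2)| := by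
    rw [Real.log_pow, abs_mul]; norm_num
  have h4 : |Real.log (‖q‖ ^ 2)| ≤ 1.39 + ‖q‖ ^ 2 := by
    have hpos : 0 < ‖q‖ ^ 2 := by positivity
    rw [abs_le]
    constructor
    · have : Real.log (1/4) ≤ Real.log (‖q‖ ^ 2) := by
        apply Real.log_le_log (by norm_num); rw [hQ]; nlinarith [sq_nonneg y]
      have e : Real.log (1/4 : ℝ) = -(2 * Real.log 2) := by
        rw [show (1/4 : ℝ) = (2 ^ 2)⁻¹ by norm_num, Real.log_inv, Real.log_pow]; norm_num
      have := Real.log_two_lt_d9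
      nlinarith
    · have := Real.log_le_sub_one_of_pos hpos
      linarith
  rw [norm_mul]
  have hpi := Real.pi_lt_d2
  norm_num at hQ h4 ⊢
  linarith

lemma pow_bound {ρ : ℝ} (h0 : 0 ≤ ρ) (h1 : ρ ≤ 1) (y : ℝ) :
    ‖((1/2 : ℝ) : ℂ) + y * Complex.I‖⁻¹ * (‖((1/2 : ℝ) : ℂ) + y * Complex.I‖ ^ (2 * ρ)) ^ 2 ≤
      ((1 - ρ) * 2 + ρ * (73 / 384)) + (ρ * (41 / 48)) * y ^ 2 + (ρ * (3 / 8)) * y ^ 4 := by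
  have hQ := normSq_q (1/2) y
  have hqn := le_norm_q (show (0:ℝ) < 1/2 by norm_num) y
  set n := ‖((1/2 : ℝ) : ℂ) + y * Complex.I‖ with hn
  have hnp : 0 < n := by linarith
  have e : (n ^ (2 * ρ)) ^ 2 = (n ^ 4) ^ ρ := by
    rw [← Real.rpow_natCast, ← Real.rpow_mul hnp.le, ← Real.rpow_natCast n 4, ← Real.rpow_mul hnp.le]
    congr 1; push_cast; ring
  have h2 : (n ^ 4) ^ ρ ≤ (1 - ρ) + ρ * n ^ 4 := by
    have := Real.geom_mean_le_arith_mean2_weighted (by linarith : 0 ≤ 1 - ρ) h0 zero_le_one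
      (by positivity : 0 ≤ n ^ 4) (by ring)
    simpa using this
  rw [e]
  have h3 : n⁻¹ ≤ 2 := by
    rw [inv_le_comm₀ hnp two_pos]; linarith
  have h4 : n ^ 3 ≤ 2 / 3 * n ^ 2 + 3 / 8 * n ^ 4 := by
    nlinarith [mul_nonneg (sq_nonneg n) (sq_nonneg (3 * n - 4))]
  have h5 : n⁻¹ * (n ^ 4) ^ ρ ≤ (1 - ρ) * n⁻¹ + ρ * n ^ 3 := by
    calc n⁻¹ * (n ^ 4) ^ ρ ≤ n⁻¹ * ((1 - ρ) + ρ * n ^ 4) := by gcongr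
      _ = (1 - ρ) * n⁻¹ + ρ * n ^ 3 := by field_simp
  have h6 : n ^ 4 = (1 / 4 + y ^ 2) ^ 2 := by rw [show n ^ 4 = (n ^ 2) ^ 2 by ring, hQ]; norm_num
  have h7 : n ^ 2 = 1 / 4 + y ^ 2 := by rw [hQ]; norm_num
  rw [h6, h7] at h4
  have h8 : (1 - ρ) * n⁻¹ ≤ (1 - ρ) * 2 := mul_le_mul_of_nonneg_left h3 (by linarith)
  have h9 := mul_le_mul_of_nonneg_left h4 h0
  nlinarith

/-- Remainder integrand. -/
noncomputable def Hk (lam L ρ y : ℝ) : ℂ :=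
  Complex.exp ((((1/2 : ℝ) : ℂ) + y * Complex.I) ^ 2) * ((((1/2 : ℝ) : ℂ) + y * Complex.I)⁻¹ *
    (Vf (lam * Real.exp (ρ * L))⁻¹ ρ (((1/2 : ℝ) : ℂ) + y * Complex.I) ^ 2
      / (1 + Vf (lam * Real.exp (ρ * L))⁻¹ ρ (((1/2 : ℝ) : ℂ) + y * Complex.I))))

/-- Its derivative in `ρ`. -/
noncomputable def Hk' (lam L ρ y : ℝ) : ℂ :=
  Complex.exp ((((1/2 : ℝ) : ℂ) + y * Complex.I) ^ 2) * ((((1/2 : ℝ) : ℂ) + y * Complex.I)⁻¹ *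
    ((2 * Complex.log (((1/2 : ℝ) : ℂ) + y * Complex.I) - L) *
    (Vf (lam * Real.exp (ρ * L))⁻¹ ρ (((1/2 : ℝ) : ℂ) + y * Complex.I) ^ 2 *
      (2 + Vf (lam * Real.exp (ρ * L))⁻¹ ρ (((1/2 : ℝ) : ℂ) + y * Complex.I))
      / (1 + Vf (lam * Real.exp (ρ * L))⁻¹ ρ (((1/2 : ℝ) : ℂ) + y * Complex.I)) ^ 2)))

lemma hasDerivAt_Vf (lam L ρ : ℝ) (q : ℂ) :
    HasDerivAt (fun ρ : ℝ => Vf (lam * Real.exp (ρ * L))⁻¹ ρ q)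
      (Vf (lam * Real.exp (ρ * L))⁻¹ ρ q * (2 * Complex.log q - L)) ρ := by
  have e : ∀ ρ : ℝ, Vf (lam * Real.exp (ρ * L))⁻¹ ρ q
      = (lam : ℂ)⁻¹ * Complex.exp ((ρ : ℂ) * (2 * Complex.log q - L)) := by
    intro ρ
    rw [Vf]
    push_cast
    rw [mul_inv, ← Complex.exp_neg, mul_assoc, ← Complex.exp_add]
    congr 2; ring
  simp_rw [e]
  have h0 : HasDerivAt (fun ρ : ℝ => (ρ : ℂ)) 1 ρ := Complex.ofRealCLM.hasDerivAt
  have h1 := ((h0.mul_const (2 * Complex.log q - L)).cexp).const_mul (lam : ℂ)⁻¹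
  refine h1.congr_deriv ?_
  ring

lemma half_pos' : (0:ℝ) < 1/2 := by norm_num

lemma hasDerivAt_Hk {lam L ρ : ℝ} (hlam : 0 < lam) (h0 : 0 ≤ ρ) (h1 : ρ ≤ 1) (y : ℝ) :
    HasDerivAt (fun ρ : ℝ => Hk lam L ρ y) (Hk' lam L ρ y) ρ := by
  have hV := hasDerivAt_Vf lam L ρ (((1/2 : ℝ) : ℂ) + y * Complex.I)
  have hne := one_add_V_ne (r := (lam * Real.exp (ρ * L))⁻¹) (by positivity) h0 h1 half_pos' y
  have h2 := (((hV.fun_pow 2).fun_div (hV.const_add 1) hne).const_mul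
    (((1/2 : ℝ) : ℂ) + y * Complex.I)⁻¹).const_mul
    (Complex.exp ((((1/2 : ℝ) : ℂ) + y * Complex.I) ^ 2))
  refine h2.congr_deriv ?_
  rw [Hk']
  congr 2
  field_simp
  push_cast
  ring

lemma Hk'_bound {lam L ρ : ℝ} (hlam : 0 < lam) (hL : 0 ≤ L) (h0 : 0 ≤ ρ) (h1 : ρ ≤ 1) (y : ℝ) :
    ‖Hk' lam L ρ y‖ ≤ ((lam * Real.exp (ρ * L))⁻¹ ^ 2 * Real.exp (1/4)) *
      (((((1 - ρ) * 2 + ρ * (73 / 384)) + (ρ * (41 / 48)) * y ^ 2 + (ρ * (3 / 8)) * y ^ 4) *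
        ((2 + 3 * y ^ 2) * ((4.85 + L) + y ^ 2))) * Real.exp (-y ^ 2)) := by
  have hr : 0 ≤ (lam * Real.exp (ρ * L))⁻¹ := by positivity
  have hpb := pow_bound h0 h1 y
  have hlb := log_bound y
  have hi1 := inv_le' hr h0 h1 half_pos' y
  have hi2 := inv_sq_le hr h0 h1 half_pos' y
  have hne := one_add_V_ne hr h0 h1 half_pos' y
  have hV := norm_Vf (ρ := ρ) hr (q_ne half_pos' y)
  have hex := norm_exp_sq (1/2) y
  rw [Hk']
  set r := (lam * Real.exp (ρ * L))⁻¹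
  set q := (((1/2 : ℝ) : ℂ) + y * Complex.I)
  set V := Vf r ρ q
  have e1 : ‖(2 * Complex.log q - L)‖ ≤ (4.85 + L) + y ^ 2 := by
    refine (norm_sub_le _ _).trans ?_
    rw [Complex.norm_real, Real.norm_of_nonneg hL]; linarith
  have e2 : ‖(2 + V) / (1 + V) ^ 2‖ ≤ 2 + 3 * y ^ 2 := by
    have : (2 + V) / (1 + V) ^ 2 = (1 + V)⁻¹ + ((1 + V) ^ 2)⁻¹ := by field_simp; ring
    rw [this]
    refine (norm_add_le _ _).trans ?_
    rw [norm_inv, norm_inv, norm_pow]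
    have a1 : y ^ 2 / (4 * (1/2) ^ 2) = y ^ 2 := by ring
    have a2 : y ^ 2 / (2 * (1/2) ^ 2) = 2 * y ^ 2 := by ring
    rw [a1] at hi1
    rw [a2] at hi2
    linarith
  have e3 : Real.exp ((1/2)^2 - y ^ 2) = Real.exp (1/4) * Real.exp (-y ^ 2) := by
    rw [← Real.exp_add]; congr 1; ring
  rw [mul_div_assoc, norm_mul, norm_mul, norm_mul, norm_mul, norm_pow, norm_inv, hex, hV, e3]
  calc Real.exp (1/4) * Real.exp (-y ^ 2) * (‖q‖⁻¹ * (‖2 * Complex.log q - L‖ *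
        ((r * ‖q‖ ^ (2 * ρ)) ^ 2 * ‖(2 + V) / (1 + V) ^ 2‖)))
      = (r ^ 2 * Real.exp (1/4)) * (((‖q‖⁻¹ * (‖q‖ ^ (2 * ρ)) ^ 2) *
        (‖(2 + V) / (1 + V) ^ 2‖ * ‖2 * Complex.log q - L‖)) * Real.exp (-y ^ 2)) := by ring
    _ ≤ _ := by
      have hp1 : 0 ≤ ‖q‖⁻¹ * (‖q‖ ^ (2 * ρ)) ^ 2 := by positivity
      have hp2 := hp1.trans hpb
      gcongr
end ML

namespace ML
open MeasureTheory Filter Topology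

lemma continuous_Vf (r ρ : ℝ) :
    Continuous (fun y : ℝ => Vf r ρ (((1/2 : ℝ) : ℂ) + y * Complex.I)) := by
  have h := continuous_log_q half_pos'
  unfold Vf
  fun_prop

lemma continuous_q : Continuous (fun y : ℝ => ((1/2 : ℝ) : ℂ) + y * Complex.I) := by fun_prop

lemma continuous_kern {r ρ : ℝ} (hr : 0 ≤ r) (h0 : 0 ≤ ρ) (h1 : ρ ≤ 1) :
    Continuous (fun y : ℝ => kern r ρ (((1/2 : ℝ) : ℂ) + y * Complex.I)) := by
  have hV := continuous_Vf r ρ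
  have hq := continuous_q
  have hi := hq.inv₀ (q_ne half_pos')
  have hd := hV.div (continuous_const.add hV) (one_add_V_ne hr h0 h1 half_pos')
  unfold kern
  exact (Complex.continuous_exp.comp (hq.pow 2)).mul (hi.mul hd)

lemma continuous_Hk {lam L ρ : ℝ} (hlam : 0 < lam) (h0 : 0 ≤ ρ) (h1 : ρ ≤ 1) :
    Continuous (fun y : ℝ => Hk lam L ρ y) := by
  have hr : 0 ≤ (lam * Real.exp (ρ * L))⁻¹ := by positivity
  have hV := continuous_Vf (lam * Real.exp (ρ * L))⁻¹ ρ
  have hq := continuous_q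
  have hi := hq.inv₀ (q_ne half_pos')
  have hd := (hV.pow 2).div (continuous_const.add hV) (one_add_V_ne hr h0 h1 half_pos')
  unfold Hk
  exact (Complex.continuous_exp.comp (hq.pow 2)).mul (hi.mul hd)

lemma continuous_Hk' {lam L ρ : ℝ} (hlam : 0 < lam) (h0 : 0 ≤ ρ) (h1 : ρ ≤ 1) :
    Continuous (fun y : ℝ => Hk' lam L ρ y) := by
  have hr : 0 ≤ (lam * Real.exp (ρ * L))⁻¹ := by positivity
  have hV := continuous_Vf (lam * Real.exp (ρ * L))⁻¹ ρ
  have hq := continuous_q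
  have hlog := continuous_log_q half_pos'
  have hi := hq.inv₀ (q_ne half_pos')
  have hd := ((hV.pow 2).mul ((continuous_const (y := (2:ℂ))).add hV)).div
    ((((continuous_const (y := (1:ℂ))).add hV)).pow 2)
    (fun y => pow_ne_zero 2 (one_add_V_ne hr h0 h1 half_pos' y))
  unfold Hk'
  exact (Complex.continuous_exp.comp (hq.pow 2)).mul
    (hi.mul (((continuous_const.mul hlog).sub continuous_const).mul hd))

lemma integrable_kern_bound :
    Integrable (fun y : ℝ => Real.exp ((1/2) ^ 2 - y ^ 2) * ((1/2)⁻¹ * (2 + y ^ 2 / (4 * (1/2) ^ 2)))) := by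
  have h := (poly_gauss 4 2 0 0 0).1.const_mul (Real.exp (1/4))
  refine h.congr (Eventually.of_forall fun y => ?_)
  have e3 : Real.exp ((1/2)^2 - y ^ 2) = Real.exp (1/4) * Real.exp (-y ^ 2) := by
    rw [← Real.exp_add]; congr 1; ring
  simp only [e3]
  ring

lemma integrable_kern {r ρ : ℝ} (hr : 0 ≤ r) (h0 : 0 ≤ ρ) (h1 : ρ ≤ 1) :
    Integrable (fun y : ℝ => kern r ρ (((1/2 : ℝ) : ℂ) + y * Complex.I)) :=
  integrable_kern_bound.mono' (continuous_kern hr h0 h1).aestronglyMeasurable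
    (Eventually.of_forall fun y => kern_bound hr h0 h1 half_pos' y)

lemma lead {r ρ : ℝ} (h1 : ρ < 1) :
    Integrable (fun y : ℝ => Complex.exp ((((1/2 : ℝ) : ℂ) + y * Complex.I) ^ 2) *
      ((((1/2 : ℝ) : ℂ) + y * Complex.I)⁻¹ * Vf r ρ (((1/2 : ℝ) : ℂ) + y * Complex.I))) ∧
    ∫ y : ℝ, Complex.exp ((((1/2 : ℝ) : ℂ) + y * Complex.I) ^ 2) *
      ((((1/2 : ℝ) : ℂ) + y * Complex.I)⁻¹ * Vf r ρ (((1/2 : ℝ) : ℂ) + y * Complex.I))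
      = ((π * (r * ((1 - ρ) / Real.Gamma (2 - ρ))) : ℝ) : ℂ) := by
  obtain ⟨hi, he⟩ := hankel' (s := 1 - ρ) (c := 1/2) (by linarith) half_pos'
  have e : (fun y : ℝ => Complex.exp ((((1/2 : ℝ) : ℂ) + y * Complex.I) ^ 2) *
      ((((1/2 : ℝ) : ℂ) + y * Complex.I)⁻¹ * Vf r ρ (((1/2 : ℝ) : ℂ) + y * Complex.I)))
    = fun y : ℝ => (r : ℂ) * (Complex.exp ((((1/2 : ℝ) : ℂ) + y * Complex.I) ^ 2) *
      (Complex.exp ((-(2 * (1 - ρ)) : ℝ) * Complex.log (((1/2 : ℝ) : ℂ) + y * Complex.I)) *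
        (((1/2 : ℝ) : ℂ) + y * Complex.I))) := by
    ext y
    have hq := q_ne half_pos' y
    rw [Vf]
    set q := (((1/2 : ℝ) : ℂ) + y * Complex.I)
    have a : Complex.exp ((-(2 * (1 - ρ)) : ℝ) * Complex.log q)
        = Complex.exp ((2 * ρ : ℝ) * Complex.log q) * (q⁻¹ * q⁻¹) := by
      rw [show (((-(2 * (1 - ρ)) : ℝ) : ℂ)) * Complex.log q
        = ((2 * ρ : ℝ) : ℂ) * Complex.log q - (Complex.log q + Complex.log q) by push_cast; ring,
        Complex.exp_sub, Complex.exp_add, Complex.exp_log hq, div_eq_mul_inv, mul_inv]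
    rw [a]
    field_simp
  rw [e]
  refine ⟨hi.const_mul _, ?_⟩
  rw [integral_const_mul, he, show 1 - ρ + 1 = 2 - ρ by ring]
  push_cast
  ring

/-- The function of `ρ` we study. -/
noncomputable def F (lam L ρ : ℝ) : ℝ := mittagLeffler ρ (-(lam * Real.exp (ρ * L)))

lemma F_kern {lam L ρ : ℝ} (hlam : 0 < lam) (h0 : 0 < ρ) (h1 : ρ ≤ 1) :
    F lam L ρ = π⁻¹ * (∫ y : ℝ, kern (lam * Real.exp (ρ * L))⁻¹ ρ
      (((1/2 : ℝ) : ℂ) + y * Complex.I)).re := by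
  rw [repr_ML h0 h1 (by positivity) half_pos', Complex.ofReal_re, F]
  field_simp

lemma Hk_eq {lam L ρ : ℝ} (hlam : 0 < lam) (h0 : 0 ≤ ρ) (h1 : ρ ≤ 1) (y : ℝ) :
    Hk lam L ρ y = Complex.exp ((((1/2 : ℝ) : ℂ) + y * Complex.I) ^ 2) *
      ((((1/2 : ℝ) : ℂ) + y * Complex.I)⁻¹ *
        Vf (lam * Real.exp (ρ * L))⁻¹ ρ (((1/2 : ℝ) : ℂ) + y * Complex.I))
      - kern (lam * Real.exp (ρ * L))⁻¹ ρ (((1/2 : ℝ) : ℂ) + y * Complex.I) := by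
  have hr : 0 ≤ (lam * Real.exp (ρ * L))⁻¹ := by positivity
  have hne := one_add_V_ne hr h0 h1 half_pos' y
  rw [Hk, kern, ← mul_sub, ← mul_sub]
  congr 2
  rw [eq_sub_iff_add_eq, ← add_div, div_eq_iff hne]
  ring

lemma integrable_Hk {lam L ρ : ℝ} (hlam : 0 < lam) (h0 : 0 ≤ ρ) (h1 : ρ < 1) :
    Integrable (fun y : ℝ => Hk lam L ρ y) := by
  simp_rw [Hk_eq hlam h0 h1.le]
  exact (lead h1).1.sub (integrable_kern (by positivity) h0 h1.le)

lemma F_Hk {lam L ρ : ℝ} (hlam : 0 < lam) (h0 : 0 < ρ) (h1 : ρ < 1) :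
    F lam L ρ = (lam * Real.exp (ρ * L))⁻¹ * ((1 - ρ) / Real.Gamma (2 - ρ))
      - π⁻¹ * (∫ y : ℝ, Hk lam L ρ y).re := by
  rw [F_kern hlam h0 h1.le]
  simp_rw [Hk_eq hlam h0.le h1.le]
  rw [integral_sub (lead h1).1 (integrable_kern (by positivity) h0.le h1.le), (lead h1).2,
    Complex.sub_re, Complex.ofReal_re, mul_sub, inv_mul_cancel_left₀ Real.pi_ne_zero, sub_sub_cancel]

lemma hasDerivAt_int {lam L ρ : ℝ} (hlam : 0 < lam) (hL : 0 ≤ L) (h0 : 0 < ρ) (h1 : ρ < 1) :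
    HasDerivAt (fun ρ : ℝ => ∫ y : ℝ, Hk lam L ρ y) (∫ y : ℝ, Hk' lam L ρ y) ρ := by
  have hb := (poly_gauss' (2 + 73/384) (41/48) (3/8) (4.85 + L)).1.const_mul
    (lam⁻¹ ^ 2 * Real.exp (1/4))
  refine (hasDerivAt_integral_of_dominated_loc_of_deriv_le (F := fun ρ y => Hk lam L ρ y)
    (F' := fun ρ y => Hk' lam L ρ y) (s := Ioo 0 1) (Ioo_mem_nhds h0 h1) ?_
    (integrable_Hk hlam h0.le h1) (continuous_Hk' hlam h0.le h1.le).aestronglyMeasurable ?_ hb ?_).2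
  · filter_upwards [Ioo_mem_nhds h0 h1] with u hu
    exact (continuous_Hk hlam hu.1.le hu.2.le).aestronglyMeasurable
  · refine Eventually.of_forall fun y u hu => ?_
    obtain ⟨u0, u1⟩ := hu
    refine (Hk'_bound hlam hL u0.le u1.le y).trans ?_
    have hx : (lam * Real.exp (u * L))⁻¹ ≤ lam⁻¹ := by
      apply inv_anti₀ hlam
      have : 1 ≤ Real.exp (u * L) := Real.one_le_exp (by positivity)
      nlinarith
    have c0 : (1 - u) * 2 + u * (73 / 384) ≤ 2 + 73 / 384 := by linarith
    have c1 : u * (41 / 48) ≤ 41 / 48 := by linarith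
    have c2 : u * (3 / 8) ≤ 3 / 8 := by linarith
    have c3 : 0 ≤ 1 - u := by linarith
    gcongr
  · exact Eventually.of_forall fun y u hu => hasDerivAt_Hk hlam hu.1.le hu.2.le y

lemma norm_int_le {lam L ρ : ℝ} (hlam : 0 < lam) (hL : 0 ≤ L) (h0 : 0 < ρ) (h1 : ρ < 1) :
    ‖∫ y : ℝ, Hk' lam L ρ y‖ ≤ ((lam * Real.exp (ρ * L))⁻¹ ^ 2 * Real.exp (1/4)) *
      (√π * ((1 - ρ) * (40.45 + 7 * L) + ρ * (45.3 + 6.13 * L))) := by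
  obtain ⟨hi, he⟩ := poly_gauss' ((1 - ρ) * 2 + ρ * (73 / 384)) (ρ * (41 / 48)) (ρ * (3 / 8)) (4.85 + L)
  refine (norm_integral_le_of_norm_le (hi.const_mul _)
    (Eventually.of_forall fun y => Hk'_bound hlam hL h0.le h1.le y)).trans ?_
  rw [integral_const_mul, he]
  refine mul_le_mul_of_nonneg_left (mul_le_mul_of_nonneg_left ?_ (by positivity)) (by positivity)
  have := mul_nonneg h0.le hL
  nlinarith

lemma kappa : Real.exp (1/4) ≤ 0.7246 * √π := by
  have h1 : Real.exp (1/4) ≤ 1.2842 := by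
    have h := Real.exp_one_lt_d9
    have e : Real.exp (1/4) ^ 4 = Real.exp 1 := by
      rw [← Real.exp_nat_mul]; norm_num
    by_contra! hc
    have : (1.2842:ℝ) ^ 4 < Real.exp (1/4) ^ 4 := by gcongr
    rw [e] at this
    norm_num at this h
    linarith
  have h2 : 1.7724 ≤ √π := by
    apply Real.le_sqrt_of_sq_le
    have := Real.pi_gt_d4
    norm_num at this ⊢
    linarith
  linarith

lemma neg_deriv {lam L ρ : ℝ} (hlam : 0 < lam) (hL : 0.69 ≤ L) (h0 : 0 < ρ) (h1 : ρ < 1)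
    (hx : 43 + 4.6 * L ≤ lam * Real.exp (ρ * L)) : deriv (F lam L) ρ < 0 := by
  have hL0 : 0 ≤ L := by norm_num at hL; linarith
  obtain ⟨D, hD, hDle⟩ := main_deriv hlam hL0 h0 h1
  have hI := hasDerivAt_int hlam hL0 h0 h1
  have hre : HasDerivAt (fun ρ : ℝ => (∫ y : ℝ, Hk lam L ρ y).re) (∫ y : ℝ, Hk' lam L ρ y).re ρ :=
    (Complex.reCLM.hasFDerivAt.comp_hasDerivAt ρ hI)
  have hF : HasDerivAt (F lam L) (D - π⁻¹ * (∫ y : ℝ, Hk' lam L ρ y).re) ρ := by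
    refine (hD.sub (hre.const_mul π⁻¹)).congr_of_eventuallyEq ?_
    filter_upwards [Ioo_mem_nhds h0 h1] with u hu
    exact F_Hk hlam hu.1 hu.2
  rw [hF.deriv]
  have hn := norm_int_le hlam hL0 h0 h1
  have habs := (Complex.abs_re_le_norm (∫ y : ℝ, Hk' lam L ρ y)).trans hn
  have hlow := (abs_le.1 habs).1
  set J := (∫ y : ℝ, Hk' lam L ρ y).re
  set x := lam * Real.exp (ρ * L)
  have hxp : 0 < x := by linarith
  set B := (1 - ρ) * (40.45 + 7 * L) + ρ * (45.3 + 6.13 * L) with hB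
  have hBp : 0 ≤ B := by
    have : 0 ≤ 1 - ρ := by linarith
    positivity
  have hs : √π * √π = π := Real.mul_self_sqrt Real.pi_pos.le
  have hk : π⁻¹ * (x⁻¹ ^ 2 * Real.exp (1/4) * (√π * B)) ≤ x⁻¹ ^ 2 * (0.7246 * B) := by
    rw [inv_mul_le_iff₀ Real.pi_pos]
    calc x⁻¹ ^ 2 * Real.exp (1/4) * (√π * B) ≤ x⁻¹ ^ 2 * (0.7246 * √π) * (√π * B) := by
          gcongr; exact kappa
      _ = (√π * √π) * (x⁻¹ ^ 2 * (0.7246 * B)) := by ring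
      _ = _ := by rw [hs]
  have hJ : -(π⁻¹ * J) ≤ x⁻¹ ^ 2 * (0.7246 * B) := by
    refine le_trans ?_ hk
    rw [← mul_neg]
    have := inv_pos.2 Real.pi_pos
    gcongr
    linarith
  have hA : 0.7246 * B < (43 + 4.6 * L) * ((1 + ρ) / 2 + L * (1 - ρ)) := by
    rw [hB]
    have a1 : 0 < 1 - ρ := by linarith
    norm_num at hL ⊢
    nlinarith [mul_nonneg a1.le (sub_nonneg.2 hL), mul_nonneg h0.le (sub_nonneg.2 hL),
      mul_nonneg a1.le (mul_nonneg hL0 hL0)]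
  have hA2 : 0.7246 * B < x * ((1 + ρ) / 2 + L * (1 - ρ)) := by
    refine hA.trans_le ?_
    have : 0 ≤ L * (1 - ρ) := mul_nonneg hL0 (by linarith)
    gcongr
  have hA3 : x⁻¹ ^ 2 * (0.7246 * B) < x⁻¹ * ((1 + ρ) / 2 + L * (1 - ρ)) := by
    have : x⁻¹ * ((1 + ρ) / 2 + L * (1 - ρ)) = x⁻¹ ^ 2 * (x * ((1 + ρ) / 2 + L * (1 - ρ))) := by
      field_simp
    rw [this]
    gcongr
  linarith

lemma continuousOn_F {lam L ρ₀ : ℝ} (hlam : 0 < lam) (h0 : 0 < ρ₀) :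
    ContinuousOn (F lam L) (Icc ρ₀ 1) := by
  have h : ContinuousOn (fun ρ : ℝ => ∫ y : ℝ, kern (lam * Real.exp (ρ * L))⁻¹ ρ
      (((1/2 : ℝ) : ℂ) + y * Complex.I)) (Icc ρ₀ 1) := by
    refine continuousOn_of_dominated (F := fun (ρ : ℝ) (y : ℝ) => kern (lam * Real.exp (ρ * L))⁻¹ ρ
      (((1/2 : ℝ) : ℂ) + y * Complex.I))
      (bound := fun y : ℝ => Real.exp ((1/2) ^ 2 - y ^ 2) * ((1/2)⁻¹ * (2 + y ^ 2 / (4 * (1/2) ^ 2))))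
      ?_ ?_ integrable_kern_bound ?_
    · intro ρ hρ
      exact (continuous_kern (by positivity) (by linarith [hρ.1]) hρ.2).aestronglyMeasurable
    · intro ρ hρ
      exact Eventually.of_forall fun y =>
        kern_bound (by positivity) (by linarith [hρ.1]) hρ.2 half_pos' y
    · refine Eventually.of_forall fun y ρ hρ => ?_
      have hV := (hasDerivAt_Vf lam L ρ (((1/2 : ℝ) : ℂ) + y * Complex.I)).continuousAt
      have hne := one_add_V_ne (r := (lam * Real.exp (ρ * L))⁻¹) (by positivity)
        (by linarith [hρ.1]) hρ.2 half_pos' y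
      unfold kern
      exact (continuousAt_const.mul (continuousAt_const.mul
        (hV.div (continuousAt_const.add hV) hne))).continuousWithinAt
  refine ((Complex.continuous_re.comp_continuousOn h).const_smul π⁻¹).congr ?_
  intro ρ hρ
  exact F_kern hlam (by linarith [hρ.1]) hρ.2

lemma ML_one (z : ℝ) : mittagLeffler 1 z = Real.exp z := by
  rw [mittagLeffler, Real.exp_eq_exp_ℝ, NormedSpace.exp_eq_tsum_div]
  congr 1
  ext k
  rw [one_mul, Real.Gamma_nat_eq_factorial]

end ML

/-- With `B₁ = 43`, `B₂ = 4.6`: if `t₀ ≥ 2` and `t₀^{ρ₀} > (B₁/ρ₀ + B₂ ln t₀)/λ₀`,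
then for every `d > 0` there is a unique `ρ ∈ [ρ₀, 1)` with `E_ρ(−λ₀ t₀^ρ) = d` iff
`e^{−λ₀ t₀} < d ≤ E_{ρ₀}(−λ₀ t₀^{ρ₀})`. -/
theorem stmt4 (ρ₀ lam₀ t₀ : ℝ) (hρ₀ : 0 < ρ₀) (hρ₀' : ρ₀ < 1) (hlam₀ : 0 < lam₀)
    (ht₀ : 2 ≤ t₀) (ht₀' : (43 / ρ₀ + 4.6 * Real.log t₀) / lam₀ < t₀ ^ ρ₀) :
    ∀ d : ℝ, 0 < d →
      ((∃! ρ : ℝ, ρ ∈ Set.Ico ρ₀ 1 ∧ mittagLeffler ρ (-(lam₀ * t₀ ^ ρ)) = d) ↔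
        (Real.exp (-(lam₀ * t₀)) < d ∧ d ≤ mittagLeffler ρ₀ (-(lam₀ * t₀ ^ ρ₀)))) := by
  have htp : 0 < t₀ := by linarith
  have hpow : ∀ ρ : ℝ, t₀ ^ ρ = Real.exp (ρ * Real.log t₀) := by
    intro ρ; rw [Real.rpow_def_of_pos htp, mul_comm]
  have hL : 0.69 ≤ Real.log t₀ := by
    have h1 := Real.log_le_log two_pos ht₀
    have h2 := Real.log_two_gt_d9
    norm_num at h2 ⊢
    linarith
  have hFe : ∀ ρ : ℝ, mittagLeffler ρ (-(lam₀ * t₀ ^ ρ)) = ML.F lam₀ (Real.log t₀) ρ := by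
    intro ρ; rw [ML.F, hpow]
  have hF1 : ML.F lam₀ (Real.log t₀) 1 = Real.exp (-(lam₀ * t₀)) := by
    rw [← hFe, ML.ML_one, Real.rpow_one]
  simp_rw [hFe]
  rw [← hF1]
  rw [hpow, div_lt_iff₀ hlam₀] at ht₀'
  have h43 : 43 ≤ 43 / ρ₀ := by
    rw [le_div_iff₀ hρ₀]; linarith
  set L := Real.log t₀
  have hL0 : 0 ≤ L := by norm_num at hL; linarith
  have hcont := ML.continuousOn_F (L := L) hlam₀ hρ₀
  have hanti : StrictAntiOn (ML.F lam₀ L) (Icc ρ₀ 1) := by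
    refine strictAntiOn_of_deriv_neg (convex_Icc ρ₀ 1) hcont ?_
    intro ρ hρ
    rw [interior_Icc] at hρ
    refine ML.neg_deriv hlam₀ hL (hρ₀.trans hρ.1) hρ.2 ?_
    have : Real.exp (ρ₀ * L) ≤ Real.exp (ρ * L) := by
      have := hρ.1.le
      gcongr
    nlinarith
  have m0 : ρ₀ ∈ Icc ρ₀ 1 := ⟨le_rfl, hρ₀'.le⟩
  have m1 : (1:ℝ) ∈ Icc ρ₀ 1 := ⟨hρ₀'.le, le_rfl⟩
  intro d _
  constructor
  · rintro ⟨ρ, ⟨hρ, rfl⟩, -⟩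
    have m : ρ ∈ Icc ρ₀ 1 := ⟨hρ.1, hρ.2.le⟩
    exact ⟨hanti m m1 hρ.2, hanti.antitoneOn m0 m hρ.1⟩
  · rintro ⟨hd1, hd2⟩
    obtain ⟨ρ, hρ, hρd⟩ := intermediate_value_Icc' hρ₀'.le hcont ⟨hd1.le, hd2⟩
    have hne : ρ ≠ 1 := by
      rintro rfl
      linarith
    refine ⟨ρ, ⟨⟨hρ.1, lt_of_le_of_ne hρ.2 hne⟩, hρd⟩, ?_⟩
    rintro u ⟨hu, hud⟩
    exact hanti.injOn ⟨hu.1, hu.2.le⟩ hρ (hud.trans hρd.symm)
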